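/- arXiv:2305.09966 — 3 statements merged into one kernel-verified Lean document; each statement's English description precedes it below -/
import Mathlib

section
/- There is a constant c > 0 such that for every AWA A with n states, the NBA U constructed from A has at most c·tpo(n) macrostates, and the NBA B_u constructed from A has at most c·n·tpo(n) macrostates, where tpo(n) is the number of total preorders on an n-element set. -/
/-!
Both bounds come from injecting the macrostates into total preorders on `Q` times a small type.
For a weak automaton a macrostate is determined by its *active set* `Y`, which agrees with `Q₁` on
rejecting SCCs and with `Q₂` on accepting ones, by total preorders on `Y ∩ C` for the relevant SCCs
`C`, and by the breakpoint data. A preorder on `Y ∩ C` extends to `C` by putting `C \ Y` on top as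
one class; it is recovered from the extension together with the bit `C \ Y ≠ ∅`
(`eq_of_topExtend`).

* `U`: put the extended preorder on `C` at the bottom, `Y \ C` above it and the remaining states on
  top. As SCCs are disjoint and nonempty, `C` is the only SCC that is an initial segment, so it is
  recovered. Three bits (`C \ Y ≠ ∅`, `Y \ C ≠ ∅`, and which choice `D` is) give `8 * tpo n`.
* `B_u`: each SCC `C` has its own bit `C \ Y ≠ ∅`, and these bits are stored in the order in which
  the extended preorders are concatenated. Fix one SCC `C₀` and give the other SCCs distinct positive
  indices; an SCC is placed at plus or minus its index according to its bit, and `C₀` at `0`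
  (`sccRank`). The bit of `C ≠ C₀` is read off by comparing `C` with `C₀`, and only the bit of `C₀`
  is stored separately. The pair `(S, D)` costs a bit and a state: either `D` is empty, and any
  state of `S` determines `S`, or `D` is the set of states below one state of `S`. This gives
  `4 * n * tpo n`.
-/

universe u v

/-- Positive Boolean formulas over `Q` (with constants tt and ff, connectives ∧ and ∨). -/
inductive PosBool (Q : Type u) : Type u
  | tt : PosBool Q
  | ff : PosBool Q
  | var : Q → PosBool Q
  | band : PosBool Q → PosBool Q → PosBool Q
  | bor : PosBool Q → PosBool Q → PosBool Q

namespace PosBool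

variable {Q : Type u}

/-- A set `Y` satisfies a positive Boolean formula. -/
def Sat (Y : Set Q) : PosBool Q → Prop
  | .tt => True
  | .ff => False
  | .var q => q ∈ Y
  | .band θ₁ θ₂ => Sat Y θ₁ ∧ Sat Y θ₂
  | .bor θ₁ θ₂ => Sat Y θ₁ ∨ Sat Y θ₂

/-- The states occurring in a formula. -/
def vars : PosBool Q → Set Q
  | .tt => ∅
  | .ff => ∅
  | .var q => {q}
  | .band θ₁ θ₂ => vars θ₁ ∪ vars θ₂
  | .bor θ₁ θ₂ => vars θ₁ ∪ vars θ₂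

/-- The dual formula: exchange tt with ff and ∧ with ∨. -/
def dual : PosBool Q → PosBool Q
  | .tt => .ff
  | .ff => .tt
  | .var q => .var q
  | .band θ₁ θ₂ => .bor (dual θ₁) (dual θ₂)
  | .bor θ₁ θ₂ => .band (dual θ₁) (dual θ₂)

end PosBool

/-- An alternating Büchi automaton with alphabet `α` and state space `Q`. -/
structure ABA (α : Type v) (Q : Type u) where
  init : Q
  delta : Q → α → PosBool Q
  acc : Set Q

namespace ABA

variable {α : Type v} {Q : Type u}

/-- The automaton `A^q`, i.e. `A` with initial state `q`. -/
def setInit (M : ABA α Q) (q : Q) : ABA α Q := { M with init := q }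

/-- Completeness: every transition formula is satisfiable. -/
def Complete (M : ABA α Q) : Prop := ∀ q a, PosBool.Sat (Set.univ : Set Q) (M.delta q a)

/-- Edge of the underlying graph. -/
def edge (M : ABA α Q) (q q' : Q) : Prop := ∃ a, q' ∈ PosBool.vars (M.delta q a)

/-- Reachability in the underlying graph. -/
def reach (M : ABA α Q) : Q → Q → Prop := Relation.ReflTransGen M.edge

/-- The strongly connected component of a state. -/
def sccOf (M : ABA α Q) (q : Q) : Set Q := {q' | M.reach q q' ∧ M.reach q' q}

/-- `C` is an SCC of the underlying graph. -/
def IsSCC (M : ABA α Q) (C : Set Q) : Prop := ∃ q, C = M.sccOf q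

/-- A weak alternating automaton: every SCC is accepting or rejecting. -/
def IsWeak (M : ABA α Q) : Prop := ∀ q : Q, M.sccOf q ⊆ M.acc ∨ M.sccOf q ∩ M.acc = ∅

/-- The dual automaton. -/
def dual (M : ABA α Q) : ABA α Q where
  init := M.init
  delta := fun q a => (M.delta q a).dual
  acc := M.accᶜ

/-- A run DAG of `M` over the ω-word `w`. -/
structure RunDAG (M : ABA α Q) (w : ℕ → α) where
  V : ℕ → Set Q
  E : ℕ → Q → Q → Prop
  init_mem : M.init ∈ V 0
  edge_src : ∀ ℓ q q', E ℓ q q' → q ∈ V ℓ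
  edge_tgt : ∀ ℓ q q', E ℓ q q' → q' ∈ V (ℓ + 1)
  sat : ∀ ℓ q, q ∈ V ℓ → PosBool.Sat {q' | E ℓ q q'} (M.delta q (w ℓ))

/-- An ω-branch of a run DAG. -/
def RunDAG.IsBranch {M : ABA α Q} {w : ℕ → α} (G : M.RunDAG w) (b : ℕ → Q) : Prop :=
  b 0 = M.init ∧ ∀ ℓ, G.E ℓ (b ℓ) (b (ℓ + 1))

/-- A run DAG is accepting if every ω-branch visits accepting states infinitely often. -/
def RunDAG.Accepting {M : ABA α Q} {w : ℕ → α} (G : M.RunDAG w) : Prop :=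
  ∀ b, G.IsBranch b → ∀ n, ∃ m, n ≤ m ∧ b m ∈ M.acc

/-- `M` accepts `w` if there is an accepting run DAG of `M` over `w`. -/
def Accepts (M : ABA α Q) (w : ℕ → α) : Prop := ∃ G : M.RunDAG w, G.Accepting

/-- The language of `M`. -/
def lang (M : ABA α Q) : Set (ℕ → α) := {w | M.Accepts w}

/-- `R`: the union of the rejecting SCCs. -/
def RejPart (M : ABA α Q) : Set Q := {q | M.sccOf q ∩ M.acc = ∅}

/-- `Acc`: the union of the accepting SCCs. -/
def AccPart (M : ABA α Q) : Set Q := {q | M.sccOf q ⊆ M.acc}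

end ABA

/-- The suffix `w[i⋯]` of an ω-word. -/
def suffix {α : Type v} (w : ℕ → α) (i : ℕ) : ℕ → α := fun n => w (i + n)

/-- `Q_w = {s ∈ Q | w ∈ L(A^s)}`. -/
def QSet {α : Type v} {Q : Type u} (M : ABA α Q) (w : ℕ → α) : Set Q :=
  {s | w ∈ (M.setInit s).lang}

/-- The unique sequence `R_w`, i.e. `i ↦ Q_{w[i⋯]}`. -/
def QSeq {α : Type v} {Q : Type u} (M : ABA α Q) (w : ℕ → α) (i : ℕ) : Set Q :=
  QSet M (suffix w i)

/-- A nondeterministic Büchi automaton. -/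
structure NBA (α : Type v) (P : Type u) where
  init : Set P
  delta : P → α → Set P
  acc : Set P

namespace NBA

variable {α : Type v} {P : Type u}

/-- A macrorun of `N` over `w`. -/
def IsMacrorun (N : NBA α P) (w : ℕ → α) (ρ : ℕ → P) : Prop :=
  ρ 0 ∈ N.init ∧ ∀ i, ρ (i + 1) ∈ N.delta (ρ i) (w i)

/-- An accepting macrorun of `N` over `w`. -/
def IsAccMacrorun (N : NBA α P) (w : ℕ → α) (ρ : ℕ → P) : Prop :=
  N.IsMacrorun w ρ ∧ ∀ n, ∃ m, n ≤ m ∧ ρ m ∈ N.acc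

/-- The language of an NBA. -/
def lang (N : NBA α P) : Set (ℕ → α) := {w | ∃ ρ, N.IsAccMacrorun w ρ}

/-- `N^m`: the NBA `N` with set of initial states `{m}`. -/
def fromState (N : NBA α P) (p : P) : NBA α P := { N with init := {p} }

/-- An NBA is unambiguous if it has at most one accepting macrorun over every word. -/
def Unambiguous (N : NBA α P) : Prop :=
  ∀ w ρ₁ ρ₂, N.IsAccMacrorun w ρ₁ → N.IsAccMacrorun w ρ₂ → ρ₁ = ρ₂

end NBA

/-- Macrostates of the Bustan–Rubin–Vardi construction: tuples `(Q₁, Q₂, Q₃, Q₄)`. -/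
abbrev BRVState (Q : Type u) := Set Q × Set Q × Set Q × Set Q

/-- Consistency of a BRV tuple: `Q₂ = Q∖Q₁`, `Q₃ ⊆ Q₁∖F`, `Q₄ ⊆ Q₂∖F̂`. -/
def BRVConsistent {α : Type v} {Q : Type u} (M : ABA α Q) (m : BRVState Q) : Prop :=
  m.2.1 = m.1ᶜ ∧ m.2.2.1 ⊆ m.1 \ M.acc ∧ m.2.2.2 ⊆ m.2.1 \ M.dual.acc

/-- The Bustan–Rubin–Vardi NBA `B` constructed from an AWA. -/
def BRV {α : Type v} {Q : Type u} (M : ABA α Q) : NBA α (BRVState Q) where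
  init := {m | BRVConsistent M m ∧ M.init ∈ m.1}
  delta := fun m σ =>
    {m' | BRVConsistent M m ∧ BRVConsistent M m' ∧
      (∀ s ∈ m.1, PosBool.Sat m'.1 (M.delta s σ)) ∧
      (∀ s ∈ m.2.1, PosBool.Sat m'.2.1 (M.dual.delta s σ)) ∧
      ((m.2.2.1 = ∅ ∧ m.2.2.2 = ∅ ∧ m'.2.2.1 = m'.1 \ M.acc ∧ m'.2.2.2 = m'.2.1 \ M.dual.acc) ∨
       ((m.2.2.1 ≠ ∅ ∨ m.2.2.2 ≠ ∅) ∧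
        (∃ Y₃ ⊆ m'.1, (∀ s ∈ m.2.2.1, PosBool.Sat Y₃ (M.delta s σ)) ∧ m'.2.2.1 = Y₃ \ M.acc) ∧
        (∃ Y₄ ⊆ m'.2.1, (∀ s ∈ m.2.2.2, PosBool.Sat Y₄ (M.dual.delta s σ)) ∧
          m'.2.2.2 = Y₄ \ M.dual.acc)))}
  acc := {m | BRVConsistent M m ∧ m.2.2.1 = ∅ ∧ m.2.2.2 = ∅}

/-- The domain of the distance function at level `i`: `(Q₁ⁱ ∩ R) ∪ (Acc ∖ Q₁ⁱ)`. -/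
def DistDom {α : Type v} {Q : Type u} (M : ABA α Q) (QS : ℕ → Set Q) (i : ℕ) : Set Q :=
  (QS i ∩ M.RejPart) ∪ (M.AccPart \ QS i)

/-- Consistency of a sequence of distance functions (Rules R1 and R2). -/
def ConsistentDist {α : Type v} {Q : Type u} (M : ABA α Q) (w : ℕ → α)
    (QS : ℕ → Set Q) (d : ℕ → Q → ℕ) : Prop :=
  ∀ i : ℕ,
    (∀ p ∈ M.RejPart ∩ QS i,
      PosBool.Sat ((QS (i + 1) \ M.sccOf p) ∪
        {q | q ∈ M.sccOf p ∩ QS (i + 1) ∧ d (i + 1) q ≤ d i p - 1}) (M.delta p (w i)) ∧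
      (1 < d i p →
        ¬ PosBool.Sat ((QS (i + 1) \ M.sccOf p) ∪
          {q | q ∈ M.sccOf p ∩ QS (i + 1) ∧ d (i + 1) q ≤ d i p - 2}) (M.delta p (w i)))) ∧
    (∀ p ∈ M.AccPart \ QS i,
      PosBool.Sat ((QS (i + 1) ∪ M.sccOf p)ᶜ ∪
        {q | q ∈ M.sccOf p \ QS (i + 1) ∧ d (i + 1) q ≤ d i p - 1}) (M.dual.delta p (w i)) ∧
      (1 < d i p →
        ¬ PosBool.Sat ((QS (i + 1) ∪ M.sccOf p)ᶜ ∪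
          {q | q ∈ M.sccOf p \ QS (i + 1) ∧ d (i + 1) q ≤ d i p - 2}) (M.dual.delta p (w i))))

/-- Strict part of a preorder. -/
def StrictOf {Q : Type u} (le : Q → Q → Prop) (p q : Q) : Prop := le p q ∧ ¬ le q p

/-- `le` is a total preorder on `D` (as a relation over `D × D`). -/
def IsTotalPreorderOn {Q : Type u} (D : Set Q) (le : Q → Q → Prop) : Prop :=
  (∀ p q, le p q → p ∈ D ∧ q ∈ D) ∧ (∀ p ∈ D, le p p) ∧
  (∀ p q r, le p q → le q r → le p r) ∧ (∀ p ∈ D, ∀ q ∈ D, le p q ∨ le q p)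

/-- `D` is downwards closed w.r.t. `le` inside the domain `Dom`. -/
def DownClosed {Q : Type u} (le : Q → Q → Prop) (Dom D : Set Q) : Prop :=
  D ⊆ Dom ∧ ∀ q ∈ D, ∀ q', le q' q → q' ∈ D

/-- The set of maximal elements of a preorder on the domain `Dom`. -/
def MaxSet {Q : Type u} (le : Q → Q → Prop) (Dom : Set Q) : Set Q :=
  {q | q ∈ Dom ∧ ∀ q' ∈ Dom, ¬ StrictOf le q q'}

/-- Rule R1' for a rejecting SCC `C`, letter `σ`, sets `Q₁, Q₁'` and preorders `le, le'`. -/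
def RuleR1 {α : Type v} {Q : Type u} (M : ABA α Q) (C : Set Q) (σ : α)
    (Q1 Q1' : Set Q) (le le' : Q → Q → Prop) : Prop :=
  ∀ q ∈ C ∩ Q1, ∀ q' ∈ C ∩ Q1,
    (StrictOf le q q' ↔ ∃ r ∈ C ∩ Q1',
      PosBool.Sat ({r' | r' ∈ C ∩ Q1' ∧ StrictOf le' r' r} ∪ (Q1' \ C)) (M.delta q σ) ∧
      ¬ PosBool.Sat ({r' | r' ∈ C ∩ Q1' ∧ StrictOf le' r' r} ∪ (Q1' \ C)) (M.delta q' σ))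

/-- Rule R2' for an accepting SCC `C`, letter `σ`, sets `Q₁, Q₁'` and preorders `le, le'`. -/
def RuleR2 {α : Type v} {Q : Type u} (M : ABA α Q) (C : Set Q) (σ : α)
    (Q1 Q1' : Set Q) (le le' : Q → Q → Prop) : Prop :=
  ∀ q ∈ C \ Q1, ∀ q' ∈ C \ Q1,
    (StrictOf le q q' ↔ ∃ r ∈ C \ Q1',
      PosBool.Sat ({r' | r' ∈ C \ Q1' ∧ StrictOf le' r' r} ∪ (Q1' ∪ C)ᶜ) (M.dual.delta q σ) ∧
      ¬ PosBool.Sat ({r' | r' ∈ C \ Q1' ∧ StrictOf le' r' r} ∪ (Q1' ∪ C)ᶜ) (M.dual.delta q' σ))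

/-- Consistency of a sequence of families of total preorders (Rules R1' and R2'). -/
def ConsistentPre {α : Type v} {Q : Type u} (M : ABA α Q) (w : ℕ → α)
    (QS : ℕ → Set Q) (pre : ℕ → Set Q → Q → Q → Prop) : Prop :=
  ∀ i C, M.IsSCC C →
    (C ⊆ M.RejPart →
      IsTotalPreorderOn (C ∩ QS i) (pre i C) ∧
      RuleR1 M C (w i) (QS i) (QS (i + 1)) (pre i C) (pre (i + 1) C)) ∧
    (C ⊆ M.AccPart →
      IsTotalPreorderOn (C \ QS i) (pre i C) ∧
      RuleR2 M C (w i) (QS i) (QS (i + 1)) (pre i C) (pre (i + 1) C))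

/-- Macrostates of the `B_u` construction: `(Q₁, Q₂, {⪯_C}_{C∈S}, S, D)`. -/
abbrev BuState (Q : Type u) := Set Q × Set Q × (Set Q → Q → Q → Prop) × Set Q × Set Q

def BuState.q1 {Q : Type u} (m : BuState Q) : Set Q := m.1
def BuState.q2 {Q : Type u} (m : BuState Q) : Set Q := m.2.1
def BuState.pre {Q : Type u} (m : BuState Q) : Set Q → Q → Q → Prop := m.2.2.1
def BuState.sS {Q : Type u} (m : BuState Q) : Set Q := m.2.2.2.1
def BuState.dD {Q : Type u} (m : BuState Q) : Set Q := m.2.2.2.2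

/-- Well-formedness of a `B_u` macrostate. -/
def BuWF {α : Type v} {Q : Type u} (M : ABA α Q) (m : BuState Q) : Prop :=
  m.q2 = m.q1ᶜ ∧
  (∀ C, M.IsSCC C →
    (C ⊆ M.RejPart → IsTotalPreorderOn (m.q1 ∩ C) (m.pre C)) ∧
    (C ⊆ M.AccPart → IsTotalPreorderOn (m.q2 ∩ C) (m.pre C))) ∧
  (∀ C, ¬ M.IsSCC C → m.pre C = fun _ _ => False) ∧
  M.IsSCC m.sS ∧
  (m.sS ⊆ M.RejPart → DownClosed (m.pre m.sS) (m.q1 ∩ m.sS) m.dD) ∧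
  (m.sS ⊆ M.AccPart → DownClosed (m.pre m.sS) (m.q2 ∩ m.sS) m.dD)

/-- The NBA `B_u` constructed from an AWA `M`, a round-robin successor `next` on SCCs
and an initial SCC `C₀`. -/
def Bu {α : Type v} {Q : Type u} (M : ABA α Q) (next : Set Q → Set Q) (C0 : Set Q) :
    NBA α (BuState Q) where
  init := {m | BuWF M m ∧ M.init ∈ m.q1 ∧ m.sS = C0 ∧ m.dD = ∅}
  delta := fun m σ =>
    {m' | BuWF M m ∧ BuWF M m' ∧
      (∀ s ∈ m.q1, PosBool.Sat m'.q1 (M.delta s σ)) ∧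
      (∀ s ∈ m.q2, PosBool.Sat m'.q2 (M.dual.delta s σ)) ∧
      (∀ C, M.IsSCC C →
        (C ⊆ M.RejPart → RuleR1 M C σ m.q1 m'.q1 (m.pre C) (m'.pre C)) ∧
        (C ⊆ M.AccPart → RuleR2 M C σ m.q1 m'.q1 (m.pre C) (m'.pre C))) ∧
      (m.dD = ∅ → m'.sS = next m.sS ∧
        (m'.sS ⊆ M.RejPart → m'.dD = m'.q1 ∩ m'.sS) ∧
        (m'.sS ⊆ M.AccPart → m'.dD = m'.q2 ∩ m'.sS)) ∧
      (m.dD ≠ ∅ → m'.sS = m.sS ∧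
        (m.sS ⊆ M.RejPart →
          (∀ s ∈ m.dD, PosBool.Sat (m'.dD ∪ (m'.q1 \ m.sS)) (M.delta s σ)) ∧
          (∀ D'', DownClosed (m'.pre m.sS) (m'.q1 ∩ m.sS) D'' →
            (∀ s ∈ m.dD, PosBool.Sat (D'' ∪ (m'.q1 \ m.sS)) (M.delta s σ)) → m'.dD ⊆ D'')) ∧
        (m.sS ⊆ M.AccPart →
          (∀ s ∈ m.dD, PosBool.Sat (m'.dD ∪ (m'.q2 \ m.sS)) (M.dual.delta s σ)) ∧
          (∀ D'', DownClosed (m'.pre m.sS) (m'.q2 ∩ m.sS) D'' →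
            (∀ s ∈ m.dD, PosBool.Sat (D'' ∪ (m'.q2 \ m.sS)) (M.dual.delta s σ)) → m'.dD ⊆ D'')))}
  acc := {m | BuWF M m ∧ m.dD = ∅}

/-- Macrostates of the `U` construction: `(Q₁, Q₂, ⪯_C, C, D)`. -/
abbrev UState (Q : Type u) := Set Q × Set Q × (Q → Q → Prop) × Set Q × Set Q

def UState.q1 {Q : Type u} (m : UState Q) : Set Q := m.1
def UState.q2 {Q : Type u} (m : UState Q) : Set Q := m.2.1
def UState.pre {Q : Type u} (m : UState Q) : Q → Q → Prop := m.2.2.1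
def UState.cC {Q : Type u} (m : UState Q) : Set Q := m.2.2.2.1
def UState.dD {Q : Type u} (m : UState Q) : Set Q := m.2.2.2.2

/-- Well-formedness of a `U` macrostate. -/
def UWF {α : Type v} {Q : Type u} (M : ABA α Q) (m : UState Q) : Prop :=
  m.q2 = m.q1ᶜ ∧ M.IsSCC m.cC ∧
  (m.cC ⊆ M.RejPart →
    IsTotalPreorderOn (m.q1 ∩ m.cC) m.pre ∧
    (m.dD = m.q1 ∩ m.cC ∨ m.dD = (m.q1 ∩ m.cC) \ MaxSet m.pre (m.q1 ∩ m.cC))) ∧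
  (m.cC ⊆ M.AccPart →
    IsTotalPreorderOn (m.q2 ∩ m.cC) m.pre ∧
    (m.dD = m.q2 ∩ m.cC ∨ m.dD = (m.q2 ∩ m.cC) \ MaxSet m.pre (m.q2 ∩ m.cC)))

/-- The NBA `U` constructed from an AWA `M`, a round-robin successor `next` on SCCs
and an initial SCC `C₀`. -/
def Uaut {α : Type v} {Q : Type u} (M : ABA α Q) (next : Set Q → Set Q) (C0 : Set Q) :
    NBA α (UState Q) where
  init := {m | UWF M m ∧ M.init ∈ m.q1 ∧ m.cC = C0 ∧ m.dD = ∅}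
  delta := fun m σ =>
    {m' | UWF M m ∧ UWF M m' ∧
      (∀ s ∈ m.q1, PosBool.Sat m'.q1 (M.delta s σ)) ∧
      (∀ s ∈ m.q2, PosBool.Sat m'.q2 (M.dual.delta s σ)) ∧
      (m.dD = ∅ → m'.cC = next m.cC ∧
        (m'.cC ⊆ M.RejPart → m'.dD = m'.q1 ∩ m'.cC) ∧
        (m'.cC ⊆ M.AccPart → m'.dD = m'.q2 ∩ m'.cC)) ∧
      (m.dD ≠ ∅ → m'.cC = m.cC ∧
        (m.cC ⊆ M.RejPart →
          RuleR1 M m.cC σ m.q1 m'.q1 m.pre m'.pre ∧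
          DownClosed m'.pre (m'.q1 ∩ m.cC) m'.dD ∧
          (∀ s ∈ m.dD, PosBool.Sat (m'.dD ∪ (m'.q1 \ m.cC)) (M.delta s σ)) ∧
          (∀ D'', DownClosed m'.pre (m'.q1 ∩ m.cC) D'' →
            (∀ s ∈ m.dD, PosBool.Sat (D'' ∪ (m'.q1 \ m.cC)) (M.delta s σ)) → m'.dD ⊆ D'')) ∧
        (m.cC ⊆ M.AccPart →
          RuleR2 M m.cC σ m.q1 m'.q1 m.pre m'.pre ∧
          DownClosed m'.pre (m'.q2 ∩ m.cC) m'.dD ∧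
          (∀ s ∈ m.dD, PosBool.Sat (m'.dD ∪ (m'.q2 \ m.cC)) (M.dual.delta s σ)) ∧
          (∀ D'', DownClosed m'.pre (m'.q2 ∩ m.cC) D'' →
            (∀ s ∈ m.dD, PosBool.Sat (D'' ∪ (m'.q2 \ m.cC)) (M.dual.delta s σ)) → m'.dD ⊆ D'')))}
  acc := {m | UWF M m ∧ m.dD = ∅}

/-- `tpo n`: the number of total preorders on an `n`-element set. -/
noncomputable def tpo (n : ℕ) : ℕ :=
  Nat.card {r : Fin n → Fin n → Prop // Reflexive r ∧ Transitive r ∧ ∀ a b, r a b ∨ r b a}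


/-! ### Counting by total preorders -/

/-- `r` is a total preorder on the whole type. -/
def IsTP {Q : Type*} (r : Q → Q → Prop) : Prop :=
  Reflexive r ∧ Transitive r ∧ ∀ a b, r a b ∨ r b a

lemma card_isTP (Q : Type*) [Finite Q] :
    Nat.card {r : Q → Q → Prop // IsTP r} = tpo (Nat.card Q) := by
  let e := Finite.equivFin Q
  refine Nat.card_congr
    { toFun := fun r => ⟨fun a b => r.1 (e.symm a) (e.symm b), ?_, ?_, ?_⟩
      invFun := fun r => ⟨fun a b => r.1 (e a) (e b), ?_, ?_, ?_⟩
      left_inv := ?_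
      right_inv := ?_ }
  · exact fun a => r.2.1 _
  · exact fun a b c h h' => r.2.2.1 h h'
  · exact fun a b => r.2.2.2 _ _
  · exact fun a => r.2.1 _
  · exact fun a b c h h' => r.2.2.1 h h'
  · exact fun a b => r.2.2.2 _ _
  · intro r; simp
  · intro r; simp

/-- A set whose elements are determined by a total preorder on `Q` and an element of `β` has at most
`|β| * tpo |Q|` elements. -/
lemma ncard_le_of_code {Q σ β : Type*} [Finite Q] [Finite β] (s : Set σ)
    (f : σ → Q → Q → Prop) (g : σ → β) (hf : ∀ m ∈ s, IsTP (f m))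
    (hinj : ∀ m ∈ s, ∀ m' ∈ s, f m = f m' → g m = g m' → m = m') :
    s.ncard ≤ Nat.card β * tpo (Nat.card Q) := by
  rw [← card_isTP, ← Nat.card_prod, ← Nat.card_coe_set_eq]
  refine Nat.card_le_card_of_injective
    (fun m : s => (g m.1, (⟨f m.1, hf m.1 m.2⟩ : {r : Q → Q → Prop // IsTP r}))) ?_
  intro m m' h
  simp only [Prod.mk.injEq, Subtype.mk.injEq] at h
  exact Subtype.ext (hinj _ m.2 _ m'.2 h.2 h.1)

/-- Lexicographic combination: compare by `κ` first and by `L` within a fibre of `κ`. -/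
def lexRel {Q : Type*} (κ : Q → ℤ) (L : Q → Q → Prop) (x y : Q) : Prop :=
  κ x < κ y ∨ (κ x = κ y ∧ L x y)

lemma isTP_lexRel {Q : Type*} (κ : Q → ℤ) (L : Q → Q → Prop)
    (hr : ∀ x, L x x) (ht : ∀ x y z, κ x = κ y → κ y = κ z → L x y → L y z → L x z)
    (hl : ∀ x y, κ x = κ y → L x y ∨ L y x) : IsTP (lexRel κ L) := by
  refine ⟨fun x => Or.inr ⟨rfl, hr x⟩, ?_, ?_⟩
  · rintro x y z (h | ⟨h, h1⟩) (h' | ⟨h', h2⟩)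
    · exact Or.inl (h.trans h')
    · exact Or.inl (h' ▸ h)
    · exact Or.inl (h ▸ h')
    · exact Or.inr ⟨h.trans h', ht x y z h h' h1 h2⟩
  · intro x y
    rcases lt_trichotomy (κ x) (κ y) with h | h | h
    · exact Or.inl (Or.inl h)
    · exact (hl x y h).imp (fun h' => Or.inr ⟨h, h'⟩) (fun h' => Or.inr ⟨h.symm, h'⟩)
    · exact Or.inr (Or.inl h)

lemma lexRel_of_eq {Q : Type*} {κ : Q → ℤ} {L : Q → Q → Prop} {x y : Q} (h : κ x = κ y) :
    lexRel κ L x y ↔ L x y := by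
  simp [lexRel, h]

/-! ### Extending a preorder by a top class -/

/-- The relation `le` on `Y`, extended by putting all points outside `Y` on top as one class. -/
def topExtend {Q : Type*} (Y : Set Q) (le : Q → Q → Prop) (x y : Q) : Prop :=
  y ∉ Y ∨ (x ∈ Y ∧ le x y)

section topExtend
variable {Q : Type*} {Y Y' C : Set Q} {le le' : Q → Q → Prop}

lemma topExtend_refl (h : IsTotalPreorderOn (Y ∩ C) le) {x : Q} (hx : x ∈ C) :
    topExtend Y le x x := by
  by_cases hY : x ∈ Y
  · exact Or.inr ⟨hY, h.2.1 x ⟨hY, hx⟩⟩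
  · exact Or.inl hY

lemma topExtend_trans (h : IsTotalPreorderOn (Y ∩ C) le) {x y z : Q}
    (h1 : topExtend Y le x y) (h2 : topExtend Y le y z) : topExtend Y le x z := by
  rcases h2 with h2 | ⟨hy, h2⟩
  · exact Or.inl h2
  · rcases h1 with h1 | ⟨hx, h1⟩
    · exact absurd hy h1
    · exact Or.inr ⟨hx, h.2.2.1 _ _ _ h1 h2⟩

lemma topExtend_total (h : IsTotalPreorderOn (Y ∩ C) le) {x y : Q} (hx : x ∈ C) (hy : y ∈ C) :
    topExtend Y le x y ∨ topExtend Y le y x := by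
  by_cases hxY : x ∈ Y
  · by_cases hyY : y ∈ Y
    · exact (h.2.2.2 x ⟨hxY, hx⟩ y ⟨hyY, hy⟩).imp
        (fun h => Or.inr ⟨hxY, h⟩) (fun h => Or.inr ⟨hyY, h⟩)
    · exact Or.inl (Or.inl hyY)
  · exact Or.inr (Or.inl hxY)

/-- If `C` has points outside `Y`, these are exactly the greatest points of `C`. -/
lemma notMem_iff_of_topExtend (hb : ∃ c ∈ C, c ∉ Y) (x : Q) :
    x ∉ Y ↔ ∀ z ∈ C, topExtend Y le z x := by
  constructor
  · exact fun hx z _ => Or.inl hx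
  · intro h
    obtain ⟨c, hc, hcY⟩ := hb
    rcases h c hc with h | h
    · exact h
    · exact absurd h.1 hcY

/-- A preorder on `Y ∩ C` is determined by its extension to `C` and by whether `C ⊆ Y`. -/
lemma eq_of_topExtend (h : IsTotalPreorderOn (Y ∩ C) le) (h' : IsTotalPreorderOn (Y' ∩ C) le')
    (hE : ∀ x ∈ C, ∀ y ∈ C, topExtend Y le x y ↔ topExtend Y' le' x y)
    (hb : (∃ c ∈ C, c ∉ Y) ↔ (∃ c ∈ C, c ∉ Y')) :
    (∀ x ∈ C, x ∈ Y ↔ x ∈ Y') ∧ le = le' := by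
  have hY : ∀ x ∈ C, x ∈ Y ↔ x ∈ Y' := by
    intro x hx
    by_cases hbY : ∃ c ∈ C, c ∉ Y
    · rw [← not_iff_not, notMem_iff_of_topExtend (le := le) hbY,
        notMem_iff_of_topExtend (le := le') (hb.1 hbY)]
      exact forall₂_congr fun z hz => hE z hz x hx
    · have hbY' := mt hb.2 hbY
      push Not at hbY hbY'
      exact iff_of_true (hbY x hx) (hbY' x hx)
  refine ⟨hY, ?_⟩
  have key : ∀ {Y : Set Q} {le : Q → Q → Prop}, IsTotalPreorderOn (Y ∩ C) le → ∀ x y,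
      le x y ↔ (x ∈ C ∧ x ∈ Y) ∧ (y ∈ C ∧ y ∈ Y) ∧ topExtend Y le x y := by
    intro Y le h x y
    constructor
    · intro hl
      have := h.1 x y hl
      exact ⟨this.1.symm, this.2.symm, Or.inr ⟨this.1.1, hl⟩⟩
    · rintro ⟨_, ⟨_, hy⟩, h | h⟩
      · exact absurd hy h
      · exact h.2
  ext x y
  rw [key h, key h']
  constructor
  · rintro ⟨⟨hx, hx'⟩, ⟨hy, hy'⟩, he⟩
    exact ⟨⟨hx, (hY x hx).1 hx'⟩, ⟨hy, (hY y hy).1 hy'⟩, (hE x hx y hy).1 he⟩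
  · rintro ⟨⟨hx, hx'⟩, ⟨hy, hy'⟩, he⟩
    exact ⟨⟨hx, (hY x hx).2 hx'⟩, ⟨hy, (hY y hy).2 hy'⟩, (hE x hx y hy).2 he⟩

end topExtend

/-- A nonempty downwards-closed subset of a finite total preorder is a principal initial segment. -/
lemma exists_eq_setOf_le {Q : Type*} [Finite Q] {Dom D : Set Q} {le : Q → Q → Prop}
    (h : IsTotalPreorderOn Dom le) (hD : DownClosed le Dom D) (hne : D.Nonempty) :
    ∃ x ∈ Dom, D = {q | le q x} := by
  have : IsTrans Q le := ⟨h.2.2.1⟩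
  have : Nonempty D := hne.to_subtype
  have : Fintype D := Fintype.ofFinite D
  have hdir : Directed le (Subtype.val : D → Q) := by
    intro a b
    rcases h.2.2.2 a.1 (hD.1 a.2) b.1 (hD.1 b.2) with hab | hab
    · exact ⟨b, hab, h.2.1 _ (hD.1 b.2)⟩
    · exact ⟨a, h.2.1 _ (hD.1 a.2), hab⟩
  obtain ⟨z, hz⟩ := hdir.finset_le Finset.univ
  refine ⟨z.1, hD.1 z.2, Set.ext fun q => ⟨fun hq => ?_, fun hq => hD.2 z.1 z.2 q hq⟩⟩
  exact hz ⟨q, hq⟩ (Finset.mem_univ _)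

/-! ### SCCs and active sets -/

namespace ABA

variable {α : Type v} {Q : Type u} (M : ABA α Q)

lemma mem_sccOf_self (q : Q) : q ∈ M.sccOf q :=
  ⟨Relation.ReflTransGen.refl, Relation.ReflTransGen.refl⟩

lemma sccOf_eq_of_mem {q x : Q} (h : x ∈ M.sccOf q) : M.sccOf x = M.sccOf q := by
  ext y
  exact ⟨fun hy => ⟨h.1.trans hy.1, hy.2.trans h.2⟩, fun hy => ⟨h.2.trans hy.1, hy.2.trans h.1⟩⟩

variable {M}

lemma IsSCC.eq_sccOf {C : Set Q} (hC : M.IsSCC C) {x : Q} (hx : x ∈ C) : C = M.sccOf x := by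
  obtain ⟨q, rfl⟩ := hC
  exact (M.sccOf_eq_of_mem hx).symm

lemma IsSCC.nonempty {C : Set Q} (hC : M.IsSCC C) : C.Nonempty := by
  obtain ⟨q, rfl⟩ := hC
  exact ⟨q, M.mem_sccOf_self q⟩

variable (M)

/-- The states on which a macrostate with first component `Q1` carries preorders: the states of `Q1`
in rejecting SCCs and the states outside `Q1` in the other SCCs. -/
def active (Q1 : Set Q) : Set Q := {q | q ∈ Q1 ↔ q ∈ M.RejPart}

variable {M}

lemma active_injective : Function.Injective M.active := by
  intro X X' h
  ext q
  have : q ∈ M.active X ↔ q ∈ M.active X' := by rw [h]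
  simp only [active, Set.mem_ofPred_eq] at this
  tauto

/-- In a weak automaton, an SCC either is rejecting and its active states are those in `Q1`, or is
accepting and its active states are those outside `Q1`. -/
lemma IsSCC.active_cases (hM : M.IsWeak) {C : Set Q} (hC : M.IsSCC C) (Q1 : Set Q) :
    (C ⊆ M.RejPart ∧ Q1 ∩ C = M.active Q1 ∩ C) ∨
      (C ⊆ M.AccPart ∧ Q1ᶜ ∩ C = M.active Q1 ∩ C) := by
  obtain ⟨q, rfl⟩ := hC
  rcases hM q with h | h
  · right
    have hrej : ∀ x ∈ M.sccOf q, x ∉ M.RejPart := by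
      intro x hx hr
      have hr : M.sccOf x ∩ M.acc = ∅ := hr
      have : x ∈ M.sccOf x ∩ M.acc := ⟨M.mem_sccOf_self x, h hx⟩
      rw [hr] at this
      exact this
    refine ⟨fun x hx => ?_, Set.ext fun x => ?_⟩
    · change M.sccOf x ⊆ M.acc
      rwa [M.sccOf_eq_of_mem hx]
    · simp only [active, Set.mem_inter_iff, Set.mem_compl_iff, Set.mem_ofPred_eq]
      have := hrej x
      tauto
  · left
    have hrej : M.sccOf q ⊆ M.RejPart := by
      intro x hx
      change M.sccOf x ∩ M.acc = ∅
      rwa [M.sccOf_eq_of_mem hx]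
    refine ⟨hrej, Set.ext fun x => ?_⟩
    simp only [active, Set.mem_inter_iff, Set.mem_ofPred_eq]
    have := @hrej x
    tauto

end ABA

/-! ### The construction `U` -/

section U
variable {α : Type v} {Q : Type u} {M : ABA α Q}

lemma UWF.unpack (hM : M.IsWeak) {m : UState Q} (h : UWF M m) :
    m.q2 = m.q1ᶜ ∧ M.IsSCC m.cC ∧ IsTotalPreorderOn (M.active m.q1 ∩ m.cC) m.pre ∧
      (m.dD = M.active m.q1 ∩ m.cC ∨
        m.dD = (M.active m.q1 ∩ m.cC) \ MaxSet m.pre (M.active m.q1 ∩ m.cC)) := by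
  obtain ⟨h2, hC, hR, hA⟩ := h
  refine ⟨h2, hC, ?_⟩
  rw [h2] at hA
  rcases hC.active_cases hM m.q1 with ⟨hs, he⟩ | ⟨hs, he⟩
  · rw [← he]; exact hR hs
  · rw [← he]; exact hA hs

open Classical in
/-- The level of a state in the preorder coding a `U` macrostate with active set `Y` and SCC `C`. -/
noncomputable def uRank (Y C : Set Q) (x : Q) : ℤ :=
  if x ∈ C then 0 else if x ∈ Y then 1 else 2

lemma uRank_of_mem {Y C : Set Q} {x : Q} (hx : x ∈ C) : uRank Y C x = 0 := by simp [uRank, hx]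

lemma uRank_pos {Y C : Set Q} {x : Q} (hx : x ∉ C) : 0 < uRank Y C x := by
  unfold uRank; split_ifs <;> simp

lemma uRank_eq_zero {Y C : Set Q} {x : Q} : uRank Y C x = 0 ↔ x ∈ C :=
  ⟨fun h => by_contra fun hx => (uRank_pos (Y := Y) hx).ne' h, uRank_of_mem⟩

/-- The preorder coding a `U` macrostate: the extended preorder on `C`, then `Y \ C`, then the
other states. -/
def uCode (Y C : Set Q) (le : Q → Q → Prop) : Q → Q → Prop :=
  lexRel (uRank Y C) (fun x y => x ∈ C → topExtend Y le x y)

lemma isTP_uCode {Y C : Set Q} {le : Q → Q → Prop} (h : IsTotalPreorderOn (Y ∩ C) le) :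
    IsTP (uCode Y C le) := by
  have hmem : ∀ {x y}, uRank Y C x = uRank Y C y → x ∈ C → y ∈ C := fun hxy hx => by
    rw [uRank_of_mem hx] at hxy
    exact uRank_eq_zero.1 hxy.symm
  refine isTP_lexRel _ _ (fun x hx => topExtend_refl h hx) ?_ ?_
  · intro x y z hxy hyz h1 h2 hx
    exact topExtend_trans h (h1 hx) (h2 (hmem hxy hx))
  · intro x y hxy
    by_cases hx : x ∈ C
    · exact (topExtend_total h hx (hmem hxy hx)).imp (fun h _ => h) (fun h _ => h)
    · exact Or.inl fun h => absurd h hx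

/-- Outside `C`, the states of `Y` are the least ones, provided there are any. -/
lemma mem_iff_of_uCode {Y C : Set Q} {le : Q → Q → Prop} (hb : ∃ c ∉ C, c ∈ Y) {x : Q}
    (hx : x ∉ C) : x ∈ Y ↔ ∀ z ∉ C, uCode Y C le x z := by
  constructor
  · intro hxY z hz
    by_cases hzY : z ∈ Y
    · exact Or.inr ⟨by simp [uRank, hx, hxY, hz, hzY], fun h => absurd h hx⟩
    · exact Or.inl (by simp [uRank, hx, hxY, hz, hzY])
  · intro h
    obtain ⟨c, hc, hcY⟩ := hb
    by_contra hxY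
    have h1 := h c hc
    simp [uCode, lexRel, uRank, hx, hxY, hc, hcY] at h1

lemma uCode_iff_of_mem {Y C : Set Q} {le : Q → Q → Prop} {x y : Q} (hx : x ∈ C) (hy : y ∈ C) :
    uCode Y C le x y ↔ topExtend Y le x y := by
  rw [uCode, lexRel_of_eq (by rw [uRank_of_mem hx, uRank_of_mem hy])]
  exact ⟨fun h => h hx, fun h _ => h⟩

/-- An SCC that is an initial segment of the code is the SCC of the macrostate. -/
lemma eq_of_uCode {Y Y' C C' : Set Q} {le le' : Q → Q → Prop} (hC : M.IsSCC C) (hC' : M.IsSCC C')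
    (h : uCode Y C le = uCode Y' C' le') : C = C' := by
  obtain ⟨x, hx⟩ := hC.nonempty
  obtain ⟨y, hy⟩ := hC'.nonempty
  by_contra hne
  have hdis : ∀ z ∈ C, z ∉ C' := fun z hz hz' =>
    hne ((hC.eq_sccOf hz).trans (hC'.eq_sccOf hz').symm)
  have hyC : y ∉ C := fun hyC => hdis y hyC hy
  have h1 : uCode Y C le x y := Or.inl (by rw [uRank_of_mem hx]; exact uRank_pos hyC)
  rw [h] at h1
  have h2 := uRank_pos (Y := Y') (hdis x hx)
  have h3 := uRank_of_mem (Y := Y') hy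
  rcases h1 with h1 | h1 <;> omega

lemma ncard_UWF_le [Finite Q] (hM : M.IsWeak) :
    {m : UState Q | UWF M m}.ncard ≤ 8 * tpo (Nat.card Q) := by
  have h8 : Nat.card (Prop × Prop × Prop) = 8 := by simp
  rw [← h8]
  refine ncard_le_of_code _ (fun m => uCode (M.active m.q1) m.cC m.pre)
    (fun m => ((∃ c ∈ m.cC, c ∉ M.active m.q1), (∃ c ∉ m.cC, c ∈ M.active m.q1),
      m.dD = M.active m.q1 ∩ m.cC)) ?_ ?_
  · exact fun m hm => isTP_uCode (hm.unpack hM).2.2.1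
  · intro m hm m' hm' hf hg
    obtain ⟨h2, hC, hle, hD⟩ := hm.unpack hM
    obtain ⟨h2', hC', hle', hD'⟩ := hm'.unpack hM
    obtain ⟨q1, q2, le, C, D⟩ := m
    obtain ⟨q1', q2', le', C', D'⟩ := m'
    simp only [UState.q1, UState.q2, UState.pre, UState.cC, UState.dD, Prod.mk.injEq,
      eq_iff_iff] at *
    obtain ⟨hg1, hg2, hg3⟩ := hg
    obtain rfl := eq_of_uCode hC hC' hf
    obtain ⟨hY, rfl⟩ := eq_of_topExtend hle hle'
      (fun x hx y hy => by rw [← uCode_iff_of_mem hx hy, hf, uCode_iff_of_mem hx hy]) hg1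
    have hYY : M.active q1 = M.active q1' := by
      ext x
      by_cases hx : x ∈ C
      · exact hY x hx
      · by_cases hb : ∃ c ∉ C, c ∈ M.active q1
        · rw [mem_iff_of_uCode (le := le) hb hx, mem_iff_of_uCode (le := le) (hg2.1 hb) hx, hf]
        · have hb' := mt hg2.2 hb
          push Not at hb hb'
          exact iff_of_false (hb x hx) (hb' x hx)
    obtain rfl := ABA.active_injective hYY
    refine ⟨rfl, h2.trans h2'.symm, rfl, rfl, ?_⟩
    by_cases hd : D = M.active q1 ∩ C
    · exact hd.trans (hg3.1 hd).symm
    · exact (hD.resolve_left hd).trans (hD'.resolve_left (mt hg3.2 hd)).symm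

end U

/-! ### The construction `B_u` -/

section Bu
variable {α : Type v} {Q : Type u} {M : ABA α Q}

lemma BuWF.unpack (hM : M.IsWeak) {m : BuState Q} (h : BuWF M m) :
    m.q2 = m.q1ᶜ ∧ (∀ C, M.IsSCC C → IsTotalPreorderOn (M.active m.q1 ∩ C) (m.pre C)) ∧
      (∀ C, ¬ M.IsSCC C → m.pre C = fun _ _ => False) ∧ M.IsSCC m.sS ∧
      DownClosed (m.pre m.sS) (M.active m.q1 ∩ m.sS) m.dD := by
  obtain ⟨h2, hC, hN, hS, hR, hA⟩ := h
  rw [h2] at hC hA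
  refine ⟨h2, fun C hCC => ?_, hN, hS, ?_⟩
  · rcases hCC.active_cases hM m.q1 with ⟨hs, he⟩ | ⟨hs, he⟩
    · rw [← he]; exact (hC C hCC).1 hs
    · rw [← he]; exact (hC C hCC).2 hs
  · rcases hS.active_cases hM m.q1 with ⟨hs, he⟩ | ⟨hs, he⟩
    · rw [← he]; exact hR hs
    · rw [← he]; exact hA hs

open Classical in
/-- The position of the set `C` in the concatenation: `0` for `C0`, and otherwise plus or minus a
positive index derived from `e`, with sign `+` exactly when `C` is not contained in `Y`. -/
noncomputable def sccRank (e : Set Q → ℕ) (C0 Y C : Set Q) : ℤ :=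
  if C = C0 then 0 else if ∃ c ∈ C, c ∉ Y then (e C + 1 : ℤ) else -(e C + 1 : ℤ)

lemma sccRank_injective {e : Set Q → ℕ} (he : Function.Injective e) (C0 Y : Set Q) :
    Function.Injective (sccRank e C0 Y) := by
  intro C C' h
  unfold sccRank at h
  split_ifs at h with h1 h2 h3 h4 h5 h6 h7
  all_goals first
    | exact h1.trans (by assumption : C' = C0).symm
    | (apply he; omega)

lemma sccRank_pos_iff {e : Set Q → ℕ} {C0 Y C : Set Q} (hC : C ≠ C0) :
    0 < sccRank e C0 Y C ↔ ∃ c ∈ C, c ∉ Y := by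
  unfold sccRank
  rw [if_neg hC]
  split_ifs with h
  · exact iff_of_true (by omega) h
  · exact iff_of_false (by omega) h

/-- The preorder coding `Y` and a family of preorders on the sets `Y ∩ C`: the extended preorders
on the SCCs, concatenated in the order of `sccRank`. -/
def buCode (M : ABA α Q) (e : Set Q → ℕ) (C0 Y : Set Q) (pre : Set Q → Q → Q → Prop) :
    Q → Q → Prop :=
  lexRel (fun x => sccRank e C0 Y (M.sccOf x)) (fun x y => topExtend Y (pre (M.sccOf x)) x y)

lemma isTP_buCode {e : Set Q → ℕ} (he : Function.Injective e) {C0 Y : Set Q}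
    {pre : Set Q → Q → Q → Prop} (h : ∀ C, M.IsSCC C → IsTotalPreorderOn (Y ∩ C) (pre C)) :
    IsTP (buCode M e C0 Y pre) := by
  refine isTP_lexRel _ _ (fun x => topExtend_refl (h _ ⟨x, rfl⟩) (M.mem_sccOf_self x)) ?_ ?_
  · intro x y z hxy _ h1 h2
    rw [← sccRank_injective he C0 Y hxy] at h2
    exact topExtend_trans (h _ ⟨x, rfl⟩) h1 h2
  · intro x y hxy
    have hs := sccRank_injective he C0 Y hxy
    rw [← hs]
    exact topExtend_total (h _ ⟨x, rfl⟩) (M.mem_sccOf_self x) (hs ▸ M.mem_sccOf_self y)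

lemma buCode_iff_of_mem {e : Set Q → ℕ} {C0 Y C : Set Q} {pre : Set Q → Q → Q → Prop}
    (hC : M.IsSCC C) {x y : Q} (hx : x ∈ C) (hy : y ∈ C) :
    buCode M e C0 Y pre x y ↔ topExtend Y (pre C) x y := by
  rw [buCode, lexRel_of_eq (by rw [← hC.eq_sccOf hx, ← hC.eq_sccOf hy]), ← hC.eq_sccOf hx]

/-- Comparing `C` with the SCC of `q0` recovers whether `C ⊆ Y`. -/
lemma buCode_base_iff {e : Set Q → ℕ} (he : Function.Injective e) {Y C : Set Q} {q0 : Q}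
    {pre : Set Q → Q → Q → Prop} (hC : M.IsSCC C) (hne : C ≠ M.sccOf q0) {x : Q} (hx : x ∈ C) :
    buCode M e (M.sccOf q0) Y pre q0 x ↔ ∃ c ∈ C, c ∉ Y := by
  have h0 : sccRank e (M.sccOf q0) Y (M.sccOf q0) = 0 := by simp [sccRank]
  have hne0 : sccRank e (M.sccOf q0) Y C ≠ 0 := fun h =>
    hne (sccRank_injective he _ Y (h.trans h0.symm))
  rw [← sccRank_pos_iff (e := e) hne, buCode, lexRel, ← hC.eq_sccOf hx, h0]
  exact ⟨fun h => h.resolve_right fun h => hne0 h.1.symm, Or.inl⟩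

/-- The SCC and the downwards-closed set of a macrostate are determined by a state of the SCC and
by whether the set is empty. -/
lemma exists_pointer [Finite Q] (hM : M.IsWeak) {m : BuState Q} (h : BuWF M m) :
    ∃ x ∈ m.sS, m.dD = ∅ ∨ m.dD = {q | m.pre m.sS q x} := by
  obtain ⟨_, hle, _, hS, hD⟩ := h.unpack hM
  rcases m.dD.eq_empty_or_nonempty with h0 | h0
  · obtain ⟨x, hx⟩ := hS.nonempty
    exact ⟨x, hx, Or.inl h0⟩
  · obtain ⟨x, hx, hxD⟩ := exists_eq_setOf_le (hle _ hS) hD h0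
    exact ⟨x, hx.2, Or.inr hxD⟩

lemma ncard_BuWF_le [Finite Q] (hM : M.IsWeak) :
    {m : BuState Q | BuWF M m}.ncard ≤ 4 * Nat.card Q * tpo (Nat.card Q) := by
  have hcard : Nat.card (Prop × Prop × Q) = 4 * Nat.card Q := by
    simp only [Nat.card_prod, Nat.card_eq_fintype_card, Fintype.card_prop]
    ring
  rw [← hcard]
  have : Nonempty Q := ⟨M.init⟩
  obtain ⟨e, he⟩ := exists_injective_nat (Set Q)
  choose! pt hptS hptD using fun (m : BuState Q) (h : BuWF M m) => exists_pointer hM h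
  refine ncard_le_of_code _ (fun m => buCode M e (M.sccOf M.init) (M.active m.q1) m.pre)
    (fun m => ((∃ c ∈ M.sccOf M.init, c ∉ M.active m.q1), m.dD = ∅, pt m)) ?_ ?_
  · exact fun m hm => isTP_buCode he (hm.unpack hM).2.1
  · intro m hm m' hm' hf hg
    obtain ⟨h2, hle, hN, hS, -⟩ := hm.unpack hM
    obtain ⟨h2', hle', hN', hS', -⟩ := hm'.unpack hM
    have hp := hptS m hm
    have hp' := hptS m' hm'
    have hd := hptD m hm
    have hd' := hptD m' hm'
    simp only [Prod.mk.injEq, eq_iff_iff] at hg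
    obtain ⟨hg1, hg2, hg3⟩ := hg
    rw [← hg3] at hp' hd'
    generalize pt m = p at hp hp' hd hd'
    clear hptS hptD hg3 hm hm'
    obtain ⟨q1, q2, pre, S, D⟩ := m
    obtain ⟨q1', q2', pre', S', D'⟩ := m'
    simp only [BuState.q1, BuState.q2, BuState.pre, BuState.sS, BuState.dD,
      Prod.mk.injEq] at *
    have hdec : ∀ C, M.IsSCC C →
        (∀ x ∈ C, x ∈ M.active q1 ↔ x ∈ M.active q1') ∧ pre C = pre' C := by
      intro C hC
      refine eq_of_topExtend (hle C hC) (hle' C hC) (fun x hx y hy => ?_) ?_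
      · rw [← buCode_iff_of_mem (e := e) (C0 := M.sccOf M.init) hC hx hy, hf,
          buCode_iff_of_mem hC hx hy]
      · by_cases hC0 : C = M.sccOf M.init
        · rw [hC0]; exact hg1
        · obtain ⟨x, hx⟩ := hC.nonempty
          rw [← buCode_base_iff he (pre := pre) hC hC0 hx, hf, buCode_base_iff he hC hC0 hx]
    obtain rfl : q1 = q1' := ABA.active_injective <| Set.ext fun x =>
      (hdec _ ⟨x, rfl⟩).1 x (M.mem_sccOf_self x)
    obtain rfl : pre = pre' := by
      funext C
      by_cases hC : M.IsSCC C
      · exact (hdec C hC).2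
      · rw [hN C hC, hN' C hC]
    obtain rfl : S = S' := (hS.eq_sccOf hp).trans (hS'.eq_sccOf hp').symm
    refine ⟨rfl, h2.trans h2'.symm, rfl, rfl, ?_⟩
    by_cases h0 : D = ∅
    · exact h0.trans (hg2.1 h0).symm
    · exact (hd.resolve_left h0).trans (hd'.resolve_left (mt hg2.2 h0)).symm

end Bu

/-- the `U` construction has `O(tpo(n))` macrostates and the `B_u`
construction has `O(n·tpo(n))` macrostates. -/
theorem bu_u_size :
    ∃ c : ℕ, 0 < c ∧
      ∀ (α Q : Type) (_ : Fintype α) (_ : Fintype Q) (M : ABA α Q), M.IsWeak →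
        {m : UState Q | UWF M m}.ncard ≤ c * tpo (Nat.card Q) ∧
        {m : BuState Q | BuWF M m}.ncard ≤ c * Nat.card Q * tpo (Nat.card Q) := by
  refine ⟨8, by norm_num, fun α Q _ _ M hM => ⟨ncard_UWF_le hM, (ncard_BuWF_le hM).trans ?_⟩⟩
  gcongr
  norm_num
end

section
/- Let tpo(n) denote the number of total preorders on an n-element set. Then lim_{n→∞} (tpo(n))^{1/n} / n = 1/(e·ln 2). -/
/-!
Write `b n = tpo n * (ln 2) ^ n / n!` (`normTpo`). Classifying a total preorder by its bottom
class gives `tpo (n + 1) = ∑ k ≤ n, C(n + 1, k + 1) * tpo (n - k)` (`tpo_succ`), that is,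
`b (n + 1) = ∑ k ≤ n, (ln 2) ^ (k + 1) / (k + 1)! * b (n - k)`. The full series of weights
`∑ k, (ln 2) ^ (k + 1) / (k + 1)!` equals `exp (ln 2) - 1 = 1`, so strong induction gives `b n ≤ 1`
(`normTpo_le_one`), and, with a bound on the tail of the exponential series, `1 / 2 ≤ b n`
(`half_le_normTpo`). These elementary bounds replace the sharp asymptotic
`tpo n ∼ n! / (2 (ln 2) ^ (n + 1))`, since bounded factors disappear on taking `n`-th roots.

By the Stirling bounds for `n!`, the ratio of `tpo n` to `(n / (e ln 2)) ^ n` (`stirlingError`)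
lies between `1` and `2 e n` for `n ≥ 1`. Its `n`-th root tends to `1`, which is the claim.
-/

universe u v

/-! ### Total preorders and their bottom classes -/

/-- Total preorders on `α`, encoded so that `tpo n` is by definition the cardinality of
`TotalPreorder (Fin n)`. -/
abbrev TotalPreorder (α : Type) : Type :=
  {r : α → α → Prop // Reflexive r ∧ Transitive r ∧ ∀ a b, r a b ∨ r b a}

namespace TotalPreorder

variable {α β : Type}

/-- Transport of total preorders along a bijection. -/
def congr (e : α ≃ β) : TotalPreorder α ≃ TotalPreorder β where
  toFun r := ⟨fun a b => r.1 (e.symm a) (e.symm b), fun a => r.2.1 _,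
    fun _ _ _ h h' => r.2.2.1 h h', fun _ _ => r.2.2.2 _ _⟩
  invFun r := ⟨fun a b => r.1 (e a) (e b), fun a => r.2.1 _,
    fun _ _ _ h h' => r.2.2.1 h h', fun _ _ => r.2.2.2 _ _⟩
  left_inv r := by apply Subtype.ext; funext a b; simp
  right_inv r := by apply Subtype.ext; funext a b; simp

theorem card_eq [Finite α] : Nat.card (TotalPreorder α) = tpo (Nat.card α) :=
  Nat.card_congr (congr (Finite.equivFin α))

open Classical in
/-- The bottom class of a total preorder: the elements lying below every element. -/
noncomputable def minimals [Fintype α] (r : TotalPreorder α) : Finset α :=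
  Finset.univ.filter fun a => ∀ b, r.1 a b

theorem mem_minimals [Fintype α] {r : TotalPreorder α} {a : α} :
    a ∈ r.minimals ↔ ∀ b, r.1 a b := by simp [minimals]

theorem minimals_nonempty [Fintype α] [Nonempty α] (r : TotalPreorder α) :
    r.minimals.Nonempty := by
  let _ : Preorder α :=
    { le := r.1, le_refl := r.2.1, le_trans := fun _ _ _ h h' => r.2.2.1 h h' }
  obtain ⟨a, ha⟩ := Set.finite_univ.exists_minimal (Set.univ_nonempty (α := α))
  refine ⟨a, mem_minimals.2 fun b => ?_⟩
  rcases r.2.2.2 a b with h | h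
  · exact h
  · exact ha.2 (Set.mem_univ b) h

/-- A total preorder with prescribed nonempty bottom class `S` is the same thing as a total
preorder on the complement of `S`: everything in `S` is placed below everything else. -/
def fiberEquiv [Fintype α] (S : Finset α) (hS : S.Nonempty) :
    {r : TotalPreorder α // r.minimals = S} ≃ TotalPreorder {a // a ∉ S} where
  toFun r := ⟨fun a b => r.1.1 a b, fun a => r.1.2.1 _,
    fun _ _ _ h h' => r.1.2.2.1 h h', fun _ _ => r.1.2.2.2 _ _⟩
  invFun r := by
    refine ⟨⟨fun a b => a ∈ S ∨ ∃ (ha : a ∉ S) (hb : b ∉ S), r.1 ⟨a, ha⟩ ⟨b, hb⟩, ?_, ?_, ?_⟩, ?_⟩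
    · intro a
      by_cases ha : a ∈ S
      · exact Or.inl ha
      · exact Or.inr ⟨ha, ha, r.2.1 _⟩
    · rintro a b c (h | ⟨ha, hb, h⟩) h'
      · exact Or.inl h
      · rcases h' with h' | ⟨hb', hc, h'⟩
        · exact absurd h' hb
        · exact Or.inr ⟨ha, hc, r.2.2.1 h h'⟩
    · intro a b
      by_cases ha : a ∈ S
      · exact Or.inl (Or.inl ha)
      by_cases hb : b ∈ S
      · exact Or.inr (Or.inl hb)
      · rcases r.2.2.2 ⟨a, ha⟩ ⟨b, hb⟩ with h | h
        · exact Or.inl (Or.inr ⟨ha, hb, h⟩)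
        · exact Or.inr (Or.inr ⟨hb, ha, h⟩)
    · ext a
      rw [mem_minimals]
      refine ⟨fun h => ?_, fun h b => Or.inl h⟩
      obtain ⟨s, hs⟩ := hS
      rcases h s with h | ⟨_, hs', _⟩
      · exact h
      · exact absurd hs hs'
  left_inv := by
    rintro ⟨r, rfl⟩
    apply Subtype.ext
    apply Subtype.ext
    funext a b
    apply propext
    constructor
    · rintro (h | ⟨_, _, h⟩)
      · exact mem_minimals.1 h b
      · exact h
    · intro h
      -- An element below a member of the bottom class is itself in the bottom class.
      by_cases ha : a ∈ r.minimals
      · exact Or.inl ha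
      · refine Or.inr ⟨ha, fun hb => ha ?_, h⟩
        exact mem_minimals.2 fun c => r.2.2.1 h (mem_minimals.1 hb c)
  right_inv r := by
    apply Subtype.ext
    funext a b
    apply propext
    constructor
    · rintro (h | ⟨_, _, h⟩)
      · exact absurd h a.2
      · exact h
    · exact fun h => Or.inr ⟨a.2, b.2, h⟩

end TotalPreorder

open TotalPreorder

/-! ### The recurrence for ordered Bell numbers -/

theorem tpo_zero : tpo 0 = 1 := by
  have : Unique {r : Fin 0 → Fin 0 → Prop // Reflexive r ∧ Transitive r ∧ ∀ a b, r a b ∨ r b a} :=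
    { default := ⟨fun _ _ => True, fun a => a.elim0, fun a => a.elim0, fun a => a.elim0⟩
      uniq := fun r => Subtype.ext (Subsingleton.elim _ _) }
  exact Nat.card_unique

/-- The recurrence for ordered Bell numbers, by classifying total preorders on `n + 1` points
according to their bottom class, of size `k + 1`. -/
theorem tpo_succ (n : ℕ) :
    tpo (n + 1) = ∑ k ∈ Finset.range (n + 1), (n + 1).choose (k + 1) * tpo (n - k) := by
  have hfib (S : Finset (Fin (n + 1))) :
      Nat.card {r : TotalPreorder (Fin (n + 1)) // r.minimals = S} =
        if S.card = 0 then 0 else tpo (n + 1 - S.card) := by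
    split_ifs with h
    · have : IsEmpty {r : TotalPreorder (Fin (n + 1)) // r.minimals = S} :=
        ⟨fun r => r.1.minimals_nonempty.ne_empty (r.2.trans (Finset.card_eq_zero.1 h))⟩
      exact Nat.card_of_isEmpty
    · rw [Nat.card_congr (fiberEquiv S (Finset.card_ne_zero.1 h)), card_eq]
      simp [Nat.card_eq_fintype_card]
  calc tpo (n + 1) = Nat.card (TotalPreorder (Fin (n + 1))) := rfl
    _ = ∑ S : Finset (Fin (n + 1)),
        Nat.card {r : TotalPreorder (Fin (n + 1)) // r.minimals = S} := by
      rw [← Nat.card_sigma]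
      exact Nat.card_congr (Equiv.sigmaFiberEquiv minimals).symm
    _ = ∑ S ∈ (Finset.univ : Finset (Fin (n + 1))).powerset,
        if S.card = 0 then 0 else tpo (n + 1 - S.card) := by
      simp_rw [hfib]; simp
    _ = _ := by
      rw [Finset.sum_powerset_apply_card (fun k => if k = 0 then 0 else tpo (n + 1 - k)),
        Finset.card_univ, Fintype.card_fin, Finset.sum_range_succ']
      simp

/-! ### Two-sided bounds up to a constant factor -/

/-- The number `tpo n` divided by its exponential growth `n! / (ln 2) ^ n`. -/
noncomputable def normTpo (n : ℕ) : ℝ := tpo n * Real.log 2 ^ n / n.factorial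

theorem normTpo_succ (n : ℕ) :
    normTpo (n + 1) = ∑ k ∈ Finset.range (n + 1),
      Real.log 2 ^ (k + 1) / (k + 1).factorial * normTpo (n - k) := by
  unfold normTpo
  rw [tpo_succ]
  push_cast
  rw [Finset.sum_mul, Finset.sum_div]
  refine Finset.sum_congr rfl fun k hk => ?_
  have hk : k ≤ n := Nat.lt_succ_iff.1 (Finset.mem_range.1 hk)
  rw [Nat.cast_choose ℝ (Nat.succ_le_succ hk), Nat.succ_sub_succ,
    show Real.log 2 ^ (n + 1) = Real.log 2 ^ (k + 1) * Real.log 2 ^ (n - k) by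
      rw [← pow_add]; congr 1; omega]
  have := Nat.factorial_ne_zero (n + 1)
  simp only [Nat.succ_eq_add_one]
  field_simp

theorem sum_exp_terms (n : ℕ) :
    ∑ k ∈ Finset.range n, Real.log 2 ^ (k + 1) / ((k + 1).factorial : ℝ) =
      ∑ k ∈ Finset.range (n + 1), Real.log 2 ^ k / (k.factorial : ℝ) - 1 := by
  simp [Finset.sum_range_succ']

theorem normTpo_zero : normTpo 0 = 1 := by simp [normTpo, tpo_zero]

theorem log_two_nonneg : 0 ≤ Real.log 2 := Real.log_nonneg one_le_two

theorem normTpo_le_one (n : ℕ) : normTpo n ≤ 1 := by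
  induction n using Nat.strong_induction_on with
  | _ n ih =>
    rcases n with _ | n
    · exact normTpo_zero.le
    · have hexp := Real.sum_le_exp_of_nonneg log_two_nonneg (n + 1 + 1)
      rw [Real.exp_log two_pos] at hexp
      calc normTpo (n + 1) = _ := normTpo_succ n
        _ ≤ ∑ k ∈ Finset.range (n + 1), Real.log 2 ^ (k + 1) / ((k + 1).factorial : ℝ) := by
          refine Finset.sum_le_sum fun k _ => mul_le_of_le_one_right ?_ (ih _ (by omega))
          have := log_two_nonneg
          positivity
        _ ≤ 1 := by rw [sum_exp_terms]; linarith

/-- The induction closes because the term `k = n` of the recurrence has the factor `normTpo 0 = 1`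
rather than `1 / 2`, and this gain makes up for the missing tail of the exponential series, which
is at most twice its first term. -/
theorem half_le_normTpo (n : ℕ) : 1 / 2 ≤ normTpo n := by
  induction n using Nat.strong_induction_on with
  | _ n ih =>
    rcases n with _ | n
    · rw [normTpo_zero]; norm_num
    · have hL := log_two_nonneg
      have hexp := Real.exp_bound' hL (by linarith [Real.log_two_lt_d9]) n.succ_pos
      rw [Real.exp_log two_pos] at hexp
      have hrem : Real.log 2 ^ (n + 1) * ((n + 1 : ℕ) + 1) / ((n + 1).factorial * (n + 1 : ℕ)) ≤
          2 * (Real.log 2 ^ (n + 1) / (n + 1).factorial) := by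
        rw [mul_div_mul_comm, mul_comm (2 : ℝ)]
        gcongr
        rw [div_le_iff₀ (by positivity)]
        push_cast
        linarith [(Nat.cast_nonneg n : (0 : ℝ) ≤ n)]
      have hsum : (∑ k ∈ Finset.range n, Real.log 2 ^ (k + 1) / ((k + 1).factorial : ℝ)) * (1 / 2) ≤
          ∑ k ∈ Finset.range n,
            Real.log 2 ^ (k + 1) / ((k + 1).factorial : ℝ) * normTpo (n - k) := by
        rw [Finset.sum_mul]
        refine Finset.sum_le_sum fun k _ => mul_le_mul_of_nonneg_left (ih _ (by omega)) ?_
        positivity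
      rw [sum_exp_terms] at hsum
      rw [normTpo_succ, Finset.sum_range_succ, Nat.sub_self, normTpo_zero]
      simp only [Nat.succ_eq_add_one] at hexp
      linarith

/-! ### Taking roots with the Stirling bounds -/

/-- The ratio of `tpo n` to the pure power `(n / (e ln 2)) ^ n`. -/
noncomputable def stirlingError (n : ℕ) : ℝ :=
  tpo n * Real.log 2 ^ n / (n / Real.exp 1) ^ n

theorem stirlingError_eq (n : ℕ) :
    stirlingError n = normTpo n * (n.factorial / (n / Real.exp 1) ^ n) := by
  unfold stirlingError normTpo
  have := Nat.factorial_ne_zero n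
  field_simp

theorem one_le_stirlingError {n : ℕ} (hn : 1 ≤ n) : 1 ≤ stirlingError n := by
  have hn' : (1 : ℝ) ≤ n := by exact_mod_cast hn
  have h := Stirling.le_factorial_stirling n
  have h2 : 2 ≤ n.factorial / (n / Real.exp 1) ^ n := by
    rw [le_div_iff₀ (by positivity)]
    refine le_trans ?_ h
    gcongr
    apply Real.le_sqrt_of_sq_le
    nlinarith [Real.pi_gt_three]
  rw [stirlingError_eq]
  nlinarith [half_le_normTpo n]

theorem stirlingError_le {n : ℕ} (hn : 1 ≤ n) : stirlingError n ≤ 2 * Real.exp 1 * n := by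
  have hn' : (1 : ℝ) ≤ n := by exact_mod_cast hn
  have h : Stirling.stirlingSeq n ≤ Real.exp 1 := by
    obtain ⟨m, rfl⟩ := Nat.exists_eq_add_of_le' hn
    have := Stirling.stirlingSeq'_antitone (Nat.zero_le m)
    simp only [Function.comp, Nat.succ_eq_add_one, zero_add] at this
    refine this.trans ?_
    rw [Stirling.stirlingSeq_one]
    exact div_le_self (Real.exp_pos _).le (Real.one_le_sqrt.2 one_le_two)
  have hs : √(2 * n : ℝ) ≤ 2 * n := by
    rw [Real.sqrt_le_left (by positivity)]
    nlinarith
  rw [Stirling.stirlingSeq, div_le_iff₀ (by positivity)] at h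
  rw [stirlingError_eq]
  have h2 : n.factorial / (n / Real.exp 1) ^ n ≤ 2 * Real.exp 1 * n := by
    rw [div_le_iff₀ (by positivity)]
    calc (n.factorial : ℝ) ≤ Real.exp 1 * (√(2 * n) * (n / Real.exp 1) ^ n) := h
      _ ≤ Real.exp 1 * (2 * n * (n / Real.exp 1) ^ n) := by gcongr
      _ = _ := by ring
  exact (mul_le_of_le_one_left (by positivity) (normTpo_le_one n)).trans h2

theorem tendsto_stirlingError_root :
    Filter.Tendsto (fun n : ℕ => stirlingError n ^ ((1 : ℝ) / n)) Filter.atTop (nhds 1) := by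
  have hn : Filter.Tendsto (fun n : ℕ => (n : ℝ) ^ ((1 : ℝ) / n)) Filter.atTop (nhds 1) :=
    tendsto_rpow_div.comp tendsto_natCast_atTop_atTop
  have hC : Filter.Tendsto (fun n : ℕ => (2 * Real.exp 1) ^ ((1 : ℝ) / n)) Filter.atTop
      (nhds 1) := by
    have h := (Real.continuousAt_const_rpow (a := 2 * Real.exp 1) (b := 0)
      (by positivity)).tendsto.comp (tendsto_one_div_atTop_nhds_zero_nat (𝕜 := ℝ))
    simpa [Function.comp_def] using h
  have hup := hC.mul hn
  rw [one_mul] at hup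
  refine tendsto_of_tendsto_of_tendsto_of_le_of_le' tendsto_const_nhds hup ?_ ?_
  · filter_upwards [Filter.eventually_ge_atTop 1] with n h
    exact Real.one_le_rpow (one_le_stirlingError h) (by positivity)
  · filter_upwards [Filter.eventually_ge_atTop 1] with n h
    rw [← Real.mul_rpow (by positivity) (by positivity)]
    exact Real.rpow_le_rpow (zero_le_one.trans (one_le_stirlingError h)) (stirlingError_le h)
      (by positivity)

/-- `lim_{n→∞} (tpo n)^{1/n} / n = 1 / (e ln 2)`. -/
theorem tpo_asymptotics :
    Filter.Tendsto (fun n : ℕ => ((tpo n : ℝ) ^ ((1 : ℝ) / (n : ℝ))) / (n : ℝ))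
      Filter.atTop (nhds (1 / (Real.exp 1 * Real.log 2))) := by
  have h := tendsto_stirlingError_root.mul_const (1 / (Real.exp 1 * Real.log 2))
  rw [one_mul] at h
  refine h.congr' ?_
  filter_upwards [Filter.eventually_ge_atTop 1] with n hn
  have hn0 : (n : ℝ) ≠ 0 := by positivity
  have hL : 0 < Real.log 2 := Real.log_pos one_lt_two
  have hc : 0 < (n : ℝ) / (Real.exp 1 * Real.log 2) := by positivity
  have htpo : (tpo n : ℝ) = stirlingError n * (n / (Real.exp 1 * Real.log 2)) ^ n := by
    unfold stirlingError
    rw [← div_div, div_pow _ (Real.log 2)]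
    field_simp
  rw [htpo, Real.mul_rpow (zero_le_one.trans (one_le_stirlingError hn)) (by positivity),
    one_div (n : ℝ), Real.pow_rpow_inv_natCast hc.le (by omega)]
  field_simp
end

section
/- Let A be an AWA, w ∈ L(A), Φ_w = (Q₁⁰,d₀)(Q₁¹,d₁)⋯ the unique consistent sequence of distance functions for R_w, and let ρ = (Q₁⁰,Q₂⁰,{⪯⁰_C}_{C∈S},S⁰,D⁰)(Q₁¹,Q₂¹,{⪯¹_C}_{C∈S},S¹,D¹)⋯ be the macrorun of B_u over w whose Q₁-components form R_w, whose preorder families form the unique consistent sequence of total preorders for R_w, and whose S- and D-components are determined by the transition relation of B_u starting from the initial macrostate with S⁰ = C₀ and D⁰ = ∅. Then for every i with Dⁱ ≠ ∅, sup{d_i(q) | q ∈ Dⁱ} = sup{d_{i+1}(q) | q ∈ D^{i+1}} + 1 (with the convention sup ∅ = 0); consequently Dⁱ = ∅ holds for infinitely many i, so ρ is an accepting macrorun of B_u. -/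
/-!
Inside a fixed SCC `C`, the consistent preorder at level `i` is the order of the distances `d i`:
`q ≺ q' ↔ d i q < d i q'` (`RankedSystem.strict_iff`). Indeed the distance of `q` is the least
`n ≥ 1` such that the states of `C` at level `i + 1` of distance at most `n - 1`, together with
`Q₁ \ C` (in the dual case, the complement of `Q₁ ∪ C`) at that level, satisfy the (dual) transition
formula of `q`. By induction on the distance, these sublevel sets, unless they are everything, are
strict initial segments for `≺`, and Rules R1' and R2' compare states by means of exactly such
segments.

Now let `m` be the largest distance on a nonempty breakpoint set `D`. The set of states of distance
at most `m - 1` at level `i + 1` is downwards closed and sufficient for all of `D`, so it contains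
the next breakpoint set `D'` by minimality; if `m ≥ 2` and all distances on `D'` were at most
`m - 2`, then `D'` would be insufficient for an element of `D` of distance `m`. So the supremum drops by exactly one
(`RankedSystem.sSup_step`). A breakpoint set that stayed nonempty forever would give an infinite
descent in `ℕ`.

Rejecting and accepting SCCs are dual to each other, and `RankedSystem` captures both cases.
-/

universe u v

/-! ### Formulas and strongly connected components -/

theorem PosBool.Sat.mono {Q : Type*} {Y Z : Set Q} (h : Y ⊆ Z) :
    ∀ {θ : PosBool Q}, PosBool.Sat Y θ → PosBool.Sat Z θ
  | .tt, _ => trivial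
  | .ff, hY => hY.elim
  | .var _, hY => h hY
  | .band _ _, hY => ⟨PosBool.Sat.mono h hY.1, PosBool.Sat.mono h hY.2⟩
  | .bor _ _, hY => hY.imp (PosBool.Sat.mono h) (PosBool.Sat.mono h)

theorem ABA.IsSCC.sccOf_eq {α Q : Type*} {M : ABA α Q} {C : Set Q} (hC : M.IsSCC C) {p : Q}
    (hp : p ∈ C) : M.sccOf p = C := by
  obtain ⟨q, rfl⟩ := hC
  ext x
  exact ⟨fun hx => ⟨hp.1.trans hx.1, hx.2.trans hp.2⟩,
    fun hx => ⟨hp.2.trans hx.1, hx.2.trans hp.1⟩⟩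

theorem ABA.IsWeak.scc_subset {α Q : Type*} {M : ABA α Q} (hM : M.IsWeak) {C : Set Q}
    (hC : M.IsSCC C) : C ⊆ M.RejPart ∨ C ⊆ M.AccPart := by
  obtain ⟨q, hq⟩ := id hC
  rcases hM q with h | h
  · right
    intro p hp
    rw [ABA.AccPart, Set.mem_ofPred_eq, hC.sccOf_eq hp, hq]
    exact h
  · left
    intro p hp
    rw [ABA.RejPart, Set.mem_ofPred_eq, hC.sccOf_eq hp, hq]
    exact h

/-! ### Distances and preorders inside one SCC -/

/-- The data of distances `d` and preorders `le` restricted to one SCC, in a form common to the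
rejecting and the accepting case. `X i` is the set of states of the SCC that carry a distance at
level `i`, and `sat i p T` says that `T ⊆ X (i + 1)`, completed by the relevant states outside the
SCC, satisfies the (dual) transition formula of `p` at level `i`. The fields `reach` and `tight` are
the two halves of the distance rule, `rule` is the preorder rule. -/
structure RankedSystem {Q : Type*} (X : ℕ → Set Q) (sat : ℕ → Q → Set Q → Prop)
    (d : ℕ → Q → ℕ) (le : ℕ → Q → Q → Prop) : Prop where
  mono : ∀ i p S T, S ⊆ T → sat i p S → sat i p T
  pos : ∀ i, ∀ p ∈ X i, 0 < d i p
  reach : ∀ i, ∀ p ∈ X i, sat i p {q | q ∈ X (i + 1) ∧ d (i + 1) q ≤ d i p - 1}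
  tight : ∀ i, ∀ p ∈ X i, 1 < d i p → ¬ sat i p {q | q ∈ X (i + 1) ∧ d (i + 1) q ≤ d i p - 2}
  tpo : ∀ i, IsTotalPreorderOn (X i) (le i)
  rule : ∀ i, ∀ q ∈ X i, ∀ q' ∈ X i, (StrictOf (le i) q q' ↔ ∃ r ∈ X (i + 1),
    sat i q {r' | r' ∈ X (i + 1) ∧ StrictOf (le (i + 1)) r' r} ∧
    ¬ sat i q' {r' | r' ∈ X (i + 1) ∧ StrictOf (le (i + 1)) r' r})

namespace RankedSystem

variable {Q : Type*} {X : ℕ → Set Q} {sat : ℕ → Q → Set Q → Prop}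
  {d : ℕ → Q → ℕ} {le : ℕ → Q → Q → Prop}

theorem strict_trans (h : RankedSystem X sat d le) {i : ℕ} {a b c : Q}
    (hab : StrictOf (le i) a b) (hbc : StrictOf (le i) b c) : StrictOf (le i) a c :=
  ⟨(h.tpo i).2.2.1 _ _ _ hab.1 hbc.1, fun hca => hab.2 ((h.tpo i).2.2.1 _ _ _ hbc.1 hca)⟩

/-- A nonempty set of states has a `≺`-minimal element. -/
theorem exists_minimal [Finite Q] (h : RankedSystem X sat d le) (i : ℕ) {s : Set Q}
    (hs : s.Nonempty) : ∃ r ∈ s, ∀ x ∈ s, ¬ StrictOf (le i) x r := by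
  have : IsTrans Q (StrictOf (le i)) := ⟨fun _ _ _ => h.strict_trans⟩
  have : Std.Irrefl (StrictOf (le i)) := ⟨fun _ ha => ha.2 ha.1⟩
  exact (Finite.wellFounded_of_trans_of_irrefl (StrictOf (le i))).has_min s hs

/-- If the states of distance at most `k` one level later suffice for `p`, then `p` has distance at
most `k + 1`. -/
theorem le_of_sat (h : RankedSystem X sat d le) {i k : ℕ} {p : Q} (hp : p ∈ X i)
    (hk : sat i p {q | q ∈ X (i + 1) ∧ d (i + 1) q ≤ k}) : d i p ≤ k + 1 := by
  by_contra! hlt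
  refine h.tight i p hp (by omega) (h.mono i p _ _ ?_ hk)
  rintro x ⟨hx, hxk⟩
  exact ⟨hx, by omega⟩

/-- The bounded form of `strict_iff` that carries the induction on the distance. -/
theorem strict_iff_of_le [Finite Q] (h : RankedSystem X sat d le) (n : ℕ) :
    ∀ i, ∀ q ∈ X i, ∀ q' ∈ X i, d i q ≤ n → (StrictOf (le i) q q' ↔ d i q < d i q') := by
  induction n with
  | zero =>
    intro i q hq q' _ hn
    have := h.pos i q hq
    omega
  | succ n ih =>
    intro i
    have key : ∀ q ∈ X i, ∀ q' ∈ X i, d i q ≤ n + 1 → d i q < d i q' →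
        StrictOf (le i) q q' := by
      intro q hq q' hq' hn hlt
      have hpos := h.pos i q hq
      have hnot : ¬ sat i q' {r | r ∈ X (i + 1) ∧ d (i + 1) r ≤ d i q - 1} := fun hs => by
        have := h.le_of_sat hq' hs
        omega
      -- A `≺`-minimal state `r` among those of distance at least `d i q` has as its strict
      -- initial segment exactly the states of distance at most `d i q - 1`.
      have hne : {r | r ∈ X (i + 1) ∧ d i q - 1 < d (i + 1) r}.Nonempty := by
        by_contra hemp
        refine hnot (h.mono i q' _ _ ?_ (h.reach i q' hq'))
        rintro x ⟨hx, -⟩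
        refine ⟨hx, ?_⟩
        by_contra hx'
        exact hemp ⟨x, hx, by omega⟩
      obtain ⟨r, ⟨hr, hrd⟩, hmin⟩ := h.exists_minimal (i + 1) hne
      have hseg : {r' | r' ∈ X (i + 1) ∧ StrictOf (le (i + 1)) r' r} =
          {r | r ∈ X (i + 1) ∧ d (i + 1) r ≤ d i q - 1} := by
        ext x
        constructor
        · rintro ⟨hx, hxr⟩
          refine ⟨hx, ?_⟩
          by_contra hx'
          exact hmin x ⟨hx, by omega⟩ hxr
        · rintro ⟨hx, hxd⟩
          exact ⟨hx, (ih (i + 1) x hx r hr (by omega)).2 (by omega)⟩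
      refine (h.rule i q hq q' hq').2 ⟨r, hr, ?_, ?_⟩
      · rw [hseg]
        exact h.reach i q hq
      · rw [hseg]
        exact hnot
    intro q hq q' hq' hn
    refine ⟨fun hs => ?_, key q hq q' hq' hn⟩
    by_contra! hle
    rcases hle.lt_or_eq with hlt | heq
    · exact hs.2 (key q' hq' q hq (by omega) hlt).1
    · -- For equal distances, the segment below the witness `r` misses a state `s` needed by `q'`;
      -- then `d r ≤ d s`, which makes this segment too small for `q`.
      obtain ⟨r, hr, h1, h2⟩ := (h.rule i q hq q' hq').1 hs
      obtain ⟨s, hs', hsd, hsr⟩ : ∃ s ∈ X (i + 1), d (i + 1) s ≤ d i q' - 1 ∧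
          ¬ StrictOf (le (i + 1)) s r := by
        by_contra! hcon
        refine h2 (h.mono i q' _ _ ?_ (h.reach i q' hq'))
        rintro x ⟨hx, hxd⟩
        exact ⟨hx, hcon x hx hxd⟩
      have hposq := h.pos i q hq
      have hposr := h.pos (i + 1) r hr
      have hrs : d (i + 1) r ≤ d (i + 1) s := by
        by_contra! hlt
        exact hsr ((ih (i + 1) s hs' r hr (by omega)).2 hlt)
      have := h.le_of_sat (k := d (i + 1) r - 1) hq (h.mono i q _ _ (by
        rintro x ⟨hx, hxr⟩
        refine ⟨hx, ?_⟩
        by_contra hx'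
        rcases (show d (i + 1) r ≤ d (i + 1) x by omega).lt_or_eq with hlt | he
        · exact hxr.2 ((ih (i + 1) r hr x hx (by omega)).2 hlt).1
        · have := (ih (i + 1) x hx r hr (by omega)).1 hxr
          omega) h1)
      omega

/-- The consistent preorders are the orders induced by the distances. -/
theorem strict_iff [Finite Q] (h : RankedSystem X sat d le) {i : ℕ} {q q' : Q} (hq : q ∈ X i)
    (hq' : q' ∈ X i) : StrictOf (le i) q q' ↔ d i q < d i q' :=
  h.strict_iff_of_le (d i q) i q hq q' hq' le_rfl

theorem downClosed [Finite Q] (h : RankedSystem X sat d le) (i k : ℕ) :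
    DownClosed (le i) (X i) {q | q ∈ X i ∧ d i q ≤ k} := by
  refine ⟨fun _ hx => hx.1, fun q hq q' hle => ?_⟩
  have hq' := ((h.tpo i).1 _ _ hle).1
  refine ⟨hq', ?_⟩
  by_contra! hlt
  exact ((h.strict_iff hq.1 hq').2 (hq.2.trans_lt hlt)).2 hle

/-- The maximal distance drops by one from a nonempty set `D` to the least downwards closed set
`D'` sufficient for all of `D`. -/
theorem sSup_step [Finite Q] (h : RankedSystem X sat d le) {i : ℕ} {D D' : Set Q}
    (hD : D ⊆ X i) (hne : D.Nonempty) (hD' : D' ⊆ X (i + 1)) (hsat : ∀ s ∈ D, sat i s D')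
    (hmin : ∀ T, DownClosed (le (i + 1)) (X (i + 1)) T → (∀ s ∈ D, sat i s T) → D' ⊆ T) :
    sSup (d i '' D) = sSup (d (i + 1) '' D') + 1 := by
  obtain ⟨p, hp, hpmax⟩ := Set.exists_max_image D (d i) D.toFinite hne
  have hpos := h.pos i p (hD hp)
  have hsup : sSup (d i '' D) = d i p := by
    refine IsGreatest.csSup_eq ⟨⟨p, hp, rfl⟩, ?_⟩
    rintro _ ⟨x, hx, rfl⟩
    exact hpmax x hx
  have hup : D' ⊆ {q | q ∈ X (i + 1) ∧ d (i + 1) q ≤ d i p - 1} := by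
    refine hmin _ (h.downClosed _ _) fun s hs => h.mono i s _ _ ?_ (h.reach i s (hD hs))
    rintro x ⟨hx, hxd⟩
    have := hpmax s hs
    exact ⟨hx, by omega⟩
  have hle : sSup (d (i + 1) '' D') ≤ d i p - 1 := by
    refine csSup_le' ?_
    rintro _ ⟨x, hx, rfl⟩
    exact (hup hx).2
  have hge := h.le_of_sat (k := sSup (d (i + 1) '' D')) (hD hp) (h.mono i p _ _ (by
    intro x hx
    exact ⟨hD' hx, le_csSup (D'.toFinite.image _).bddAbove ⟨x, hx, rfl⟩⟩) (hsat p hp))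
  omega

end RankedSystem

/-! ### Rejecting and accepting SCCs, and the breakpoint sets -/

theorem rankedSystem_rej {α Q : Type*} {M : ABA α Q} {w : ℕ → α} {QS : ℕ → Set Q}
    {d : ℕ → Q → ℕ} {pre : ℕ → Set Q → Q → Q → Prop}
    (hdpos : ∀ i : ℕ, ∀ q ∈ DistDom M QS i, 0 < d i q) (hd : ConsistentDist M w QS d)
    (hpre : ConsistentPre M w QS pre) {C : Set Q} (hC : M.IsSCC C) (hR : C ⊆ M.RejPart) :
    RankedSystem (fun i => C ∩ QS i)
      (fun i p T => PosBool.Sat (T ∪ (QS (i + 1) \ C)) (M.delta p (w i))) d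
      (fun i => pre i C) where
  mono i p S T hST := PosBool.Sat.mono (Set.union_subset_union_left _ hST)
  pos i p hp := hdpos i p (Or.inl ⟨hp.2, hR hp.1⟩)
  reach i p hp := by
    have := ((hd i).1 p ⟨hR hp.1, hp.2⟩).1
    rwa [hC.sccOf_eq hp.1, Set.union_comm] at this
  tight i p hp := by
    have := ((hd i).1 p ⟨hR hp.1, hp.2⟩).2
    rwa [hC.sccOf_eq hp.1, Set.union_comm] at this
  tpo i := ((hpre i C hC).1 hR).1
  rule i := ((hpre i C hC).1 hR).2

theorem rankedSystem_acc {α Q : Type*} {M : ABA α Q} {w : ℕ → α} {QS : ℕ → Set Q}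
    {d : ℕ → Q → ℕ} {pre : ℕ → Set Q → Q → Q → Prop}
    (hdpos : ∀ i : ℕ, ∀ q ∈ DistDom M QS i, 0 < d i q) (hd : ConsistentDist M w QS d)
    (hpre : ConsistentPre M w QS pre) {C : Set Q} (hC : M.IsSCC C) (hA : C ⊆ M.AccPart) :
    RankedSystem (fun i => C \ QS i)
      (fun i p T => PosBool.Sat (T ∪ (QS (i + 1) ∪ C)ᶜ) (M.dual.delta p (w i))) d
      (fun i => pre i C) where
  mono i p S T hST := PosBool.Sat.mono (Set.union_subset_union_left _ hST)
  pos i p hp := hdpos i p (Or.inr ⟨hA hp.1, hp.2⟩)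
  reach i p hp := by
    have := ((hd i).2 p ⟨hA hp.1, hp.2⟩).1
    rwa [hC.sccOf_eq hp.1, Set.union_comm] at this
  tight i p hp := by
    have := ((hd i).2 p ⟨hA hp.1, hp.2⟩).2
    rwa [hC.sccOf_eq hp.1, Set.union_comm] at this
  tpo i := ((hpre i C hC).2 hA).1
  rule i := ((hpre i C hC).2 hA).2

/-- If a natural number attached to the sets `D i` drops by one whenever `D i` is nonempty, then
`D` is empty at arbitrarily late indices. -/
theorem exists_empty_of_step {Q : Type*} {D : ℕ → Set Q} {f : ℕ → ℕ}
    (hstep : ∀ i, D i ≠ ∅ → f i = f (i + 1) + 1) (n : ℕ) : ∃ m, n ≤ m ∧ D m = ∅ := by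
  by_contra! hcon
  have hf : ∀ k, f n = f (n + k) + k := by
    intro k
    induction k with
    | zero => rfl
    | succ k ih =>
      have := hstep (n + k) (hcon _ (by omega)).ne_empty
      rw [add_assoc] at this
      omega
  have := hf (f n + 1)
  omega

/-- along the macrorun of `B_u` built from the unique consistent data
for an accepted word, the supremum of the distances on the breakpoint set decreases by
one at each step; hence the breakpoint set empties infinitely often and the macrorun
is accepting. -/
theorem bu_breakpoint_decreasing {α Q : Type} [Fintype α] [Fintype Q] (M : ABA α Q)
    (hweak : M.IsWeak) (hcomp : M.Complete)
    (next : Set Q → Set Q) (C0 : Set Q) (hC0 : M.IsSCC C0)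
    (hnext : ∀ C, M.IsSCC C → M.IsSCC (next C))
    (hcyc : ∀ C C', M.IsSCC C → M.IsSCC C' → ∃ k : ℕ, next^[k] C = C')
    (w : ℕ → α) (hw : w ∈ M.lang) (d : ℕ → Q → ℕ)
    (hdpos : ∀ i : ℕ, ∀ q ∈ DistDom M (QSeq M w) i, 0 < d i q)
    (hd : ConsistentDist M w (QSeq M w) d)
    (ρ : ℕ → BuState Q) (hρ : (Bu M next C0).IsMacrorun w ρ)
    (hq1 : ∀ i : ℕ, (ρ i).q1 = QSeq M w i)
    (hpre : ConsistentPre M w (QSeq M w) (fun i => (ρ i).pre)) :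
    (∀ i : ℕ, (ρ i).dD ≠ ∅ →
      sSup (d i '' (ρ i).dD) = sSup (d (i + 1) '' (ρ (i + 1)).dD) + 1) ∧
    {i : ℕ | (ρ i).dD = ∅}.Infinite ∧
    (Bu M next C0).IsAccMacrorun w ρ := by
  have hstep : ∀ i : ℕ, (ρ i).dD ≠ ∅ →
      sSup (d i '' (ρ i).dD) = sSup (d (i + 1) '' (ρ (i + 1)).dD) + 1 := by
    intro i hne
    obtain ⟨hwf, hwf', -, -, -, -, hD⟩ := hρ.2 i
    obtain ⟨hS, hDR, hDA⟩ := hD hne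
    obtain ⟨hq2, -, -, hscc, hcR, hcA⟩ := hwf
    obtain ⟨hq2', -, -, -, hcR', hcA'⟩ := hwf'
    rw [hS] at hcR' hcA'
    rw [hq1] at hq2 hq2'
    have hne' := Set.nonempty_iff_ne_empty.2 hne
    rcases hweak.scc_subset hscc with hR | hA
    · have hsys := rankedSystem_rej hdpos hd hpre hscc hR
      have h1 := (hcR hR).1
      have h2 := (hcR' hR).1
      obtain ⟨h3, h4⟩ := hDR hR
      rw [hq1, Set.inter_comm] at h1 h2
      rw [hq1] at h3 h4
      rw [Set.inter_comm] at h4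
      exact hsys.sSup_step h1 hne' h2 h3 h4
    · have hsys := rankedSystem_acc hdpos hd hpre hscc hA
      have h1 := (hcA hA).1
      have h2 := (hcA' hA).1
      obtain ⟨h3, h4⟩ := hDA hA
      rw [hq2, Set.inter_comm, ← Set.sdiff_eq] at h1
      rw [hq2', Set.inter_comm, ← Set.sdiff_eq] at h2
      rw [hq2', Set.sdiff_eq, ← Set.compl_union] at h3 h4
      rw [Set.inter_comm, ← Set.sdiff_eq] at h4
      exact hsys.sSup_step h1 hne' h2 h3 h4
  have hex := exists_empty_of_step (D := fun i => (ρ i).dD)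
    (f := fun i => sSup (d i '' (ρ i).dD)) hstep
  refine ⟨hstep, Set.infinite_of_not_bddAbove ?_, hρ, fun n => ?_⟩
  · rintro ⟨b, hb⟩
    obtain ⟨m, hm, he⟩ := hex (b + 1)
    have := hb he
    omega
  · obtain ⟨m, hm, he⟩ := hex n
    exact ⟨m, hm, (hρ.2 m).1, he⟩
end
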